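/- arXiv:2004.07581 — 3 statements merged into one kernel-verified Lean document; each statement's English description precedes it below -/
import Mathlib

section
/- (Carlitz identity, Proposition 3.2.) For every nonnegative integer d, the identity of formal power series in one variable t over ℚ holds: (∑_{k≥1} k^d t^k) · (1−t)^{d+1} = t · E_d(t), where E_d(t) is the Eulerian polynomial regarded as a power series. -/
/-- The number of descents of a permutation of `Fin n`: indices `i` with
`i+1 < n` and `σ (i+1) < σ i`. -/
noncomputable def descentCount {n : ℕ} (σ : Equiv.Perm (Fin n)) : ℕ :=
  Nat.card {i : Fin n // ∃ h : (i : ℕ) + 1 < n, σ ⟨(i : ℕ) + 1, h⟩ < σ i}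

/-- The Eulerian polynomial `E_n(t) = ∑_{σ ∈ S_n} t^{des σ}`. -/
noncomputable def eulerianPoly (R : Type*) [CommSemiring R] (n : ℕ) : Polynomial R :=
  ∑ σ : Equiv.Perm (Fin n), Polynomial.X ^ descentCount σ

/-!
Write `A_d = t E_d(t)` and `F_d = ∑_{k≥1} k^d t^k`. Since `F_{d+1} = t F_d'`, the claim
`F_d (1 - t)^{d+1} = A_d` follows by induction from `A_0 = t` and
`A_{d+1} = (d+1) t A_d + t (1 - t) A_d'`.

For the recurrence, pad the word of `σ ∈ S_n` by a small letter in front and a still smaller one at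
the end: of its `n + 1` gaps, exactly `c = des σ + 1` are descents. Each permutation of `n + 1`
letters arises once by inserting the new maximum into a gap of such a word, and this makes that gap
a descent while keeping all others. So `σ` accounts for `c t^c + (n + 1 - c) t^{c+1}` in `A_{n+1}`.
-/

section PowerSeries

open PowerSeries

lemma mk_ite_pow_zero_mul_one_sub_X (R : Type*) [CommRing R] :
    (mk fun k ↦ if k = 0 then (0 : R) else (k : R) ^ 0) * (1 - X) = X := by
  have shift : (mk fun k ↦ if k = 0 then (0 : R) else (k : R) ^ 0) = X * mk 1 := by
    ext k
    cases k <;> simp [coeff_succ_X_mul]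
  rw [shift, mul_assoc, mk_one_mul_one_sub_eq_one, mul_one]

lemma mk_ite_pow_succ_eq_X_mul_derivative (R : Type*) [CommSemiring R] (d : ℕ) :
    (mk fun k ↦ if k = 0 then (0 : R) else (k : R) ^ (d + 1)) =
      X * derivative R (mk fun k ↦ if k = 0 then (0 : R) else (k : R) ^ d) := by
  ext k
  cases k <;> simp [coeff_succ_X_mul, coeff_derivative, pow_succ]

lemma X_mul_derivative_mul_one_sub_X_pow {R : Type*} [CommRing R] (f : R⟦X⟧) (n : ℕ) :
    X * derivative R f * (1 - X) ^ (n + 2) =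
      ((n : R⟦X⟧) + 1) * X * (f * (1 - X) ^ (n + 1)) +
        X * (1 - X) * derivative R (f * (1 - X) ^ (n + 1)) := by
  simp only [Derivation.leibniz, Derivation.leibniz_pow, map_sub, derivative_X, derivative_one,
    smul_eq_mul, nsmul_eq_mul, Nat.add_sub_cancel]
  push_cast
  ring

end PowerSeries

open Finset

section Descents

variable {α : Type*} [Preorder α] [DecidableLT α] {m : ℕ}

/-- The descents of a word `w` with `m + 1` letters, as a set of gaps: gap `i` lies between the
letters `i.castSucc` and `i.succ`. -/
def descents (w : Fin (m + 1) → α) : Finset (Fin m) :=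
  {i | w i.succ < w i.castSucc}

lemma mem_descents {w : Fin (m + 1) → α} {i : Fin m} :
    i ∈ descents w ↔ w i.succ < w i.castSucc := by
  simp [descents]

/-- The new letter splits gap `p` into the gaps `p.castSucc` and `p.succ`; only the second of them
is a descent, and `p.castSucc.succAbove p = p.succ`. -/
lemma descents_insertNth {w : Fin (m + 1) → α} {p : Fin m} {a : α}
    (hleft : w p.castSucc ≤ a) (hright : w p.succ < a) :
    descents (p.castSucc.succ.insertNth (α := fun _ ↦ α) a w) =
      (insert p (descents w)).map p.castSucc.succAboveEmb := by
  set w' : Fin (m + 2) → α := p.castSucc.succ.insertNth a w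
  have new_letter : w' p.castSucc.succ = a := Fin.insertNth_apply_same ..
  have old_letter (i : Fin (m + 1)) : w' (p.castSucc.succ.succAbove i) = w i :=
    Fin.insertNth_apply_succAbove ..
  ext k
  obtain rfl | ⟨j, rfl⟩ := Fin.eq_self_or_eq_succAbove p.castSucc k
  · have left_letter : w' p.castSucc.castSucc = w p.castSucc := by
      simpa using old_letter p.castSucc
    simp [mem_descents, new_letter, left_letter, hleft.not_gt, p.castSucc_lt_succ.ne]
  · have right_letter : w' (p.castSucc.succAbove j).succ = w j.succ := by
      rw [← Fin.succ_succAbove_succ, old_letter]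
    rw [mem_descents, right_letter, ← Fin.succAboveEmb_apply, mem_map', mem_insert, mem_descents,
      Fin.succAboveEmb_apply]
    obtain rfl | hjp := eq_or_ne j p
    · simpa [new_letter] using hright
    · have left_letter : w' (p.castSucc.succAbove j).castSucc = w j.castSucc := by
        have same_position :
            p.castSucc.succ.succAbove j.castSucc = (p.castSucc.succAbove j).castSucc := by
          grind [Fin.succAbove]
        rw [← same_position, old_letter]
      simp [left_letter, hjp]

lemma descents_cons {w : Fin (m + 1) → α} {a : α} (h : a ≤ w 0) :
    descents (Fin.cons a w : Fin (m + 2) → α) = (descents w).map (Fin.succEmb m) := by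
  ext i
  cases i using Fin.cases with
  | zero => simp [mem_descents, h.not_gt]
  | succ i =>
    rw [mem_descents, ← Fin.succ_castSucc]
    simp [mem_descents]

lemma descents_snoc {w : Fin (m + 1) → α} {a : α} (h : a < w (Fin.last m)) :
    descents (Fin.snoc w a : Fin (m + 2) → α) =
      insert (Fin.last m) ((descents w).map Fin.castSuccEmb) := by
  ext i
  cases i using Fin.lastCases with
  | last => simp [mem_descents, h]
  | cast i => simp [mem_descents, Fin.succ_castSucc, -Fin.castSucc_succ]

end Descents

lemma descentCount_eq_card_descents {m : ℕ} (σ : Equiv.Perm (Fin (m + 1))) :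
    descentCount σ = #(descents σ) := by
  rw [descentCount, Nat.subtype_card ((descents σ).map Fin.castSuccEmb), card_map]
  intro i
  cases i using Fin.lastCases with
  | last => simp
  | cast i => simp [mem_descents, Fin.succ]

section PaddedWord

variable {n : ℕ}

/-- The word of a permutation, padded by two small letters: `-1` in front, so that the first gap is
not a descent, and `-2` at the end, so that the last gap is one. The gaps `Fin (n + 1)` are then
the places where a letter can be inserted, also for `n = 0`. -/
def paddedWord (σ : Equiv.Perm (Fin n)) : Fin (n + 2) → ℤ :=
  Fin.cons (-1) (Fin.snoc (α := fun _ ↦ ℤ) (fun i ↦ ((σ i : ℕ) : ℤ)) (-2))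

lemma paddedWord_zero (σ : Equiv.Perm (Fin n)) : paddedWord σ 0 = -1 := rfl

lemma paddedWord_succ_castSucc (σ : Equiv.Perm (Fin n)) (i : Fin n) :
    paddedWord σ i.castSucc.succ = (σ i : ℕ) := by
  simp [paddedWord, -Fin.castSucc_succ]

lemma paddedWord_succ_last (σ : Equiv.Perm (Fin n)) :
    paddedWord σ (Fin.last n).succ = -2 := by
  simp [paddedWord, -Fin.succ_last]

lemma paddedWord_lt (σ : Equiv.Perm (Fin n)) (i : Fin (n + 2)) : paddedWord σ i < n := by
  cases i using Fin.cases with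
  | zero => rw [paddedWord_zero]; lia
  | succ i => cases i using Fin.lastCases with
    | last => rw [paddedWord_succ_last]; lia
    | cast i => rw [paddedWord_succ_castSucc]; exact_mod_cast (σ i).isLt

lemma card_descents_paddedWord (σ : Equiv.Perm (Fin n)) :
    #(descents (paddedWord σ)) = descentCount σ + 1 := by
  cases n with
  | zero => simp [paddedWord, descents, descentCount, filter_singleton, Fin.snoc]
  | succ m =>
    have descents_val : descents (fun i ↦ ((σ i : ℕ) : ℤ)) = descents σ := by
      ext i
      simp [mem_descents]
    rw [paddedWord, descents_cons (by grind [Fin.snoc]), card_map,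
      descents_snoc (by lia), card_insert_of_notMem (by simp), card_map, descents_val,
      descentCount_eq_card_descents]

/-- Insertion of the new maximal value `n` at position `p` of a permutation of `Fin n`. Removing `p`
from the positions and `n` from the values leaves `σ`. -/
def insertMax (p : Fin (n + 1)) (σ : Equiv.Perm (Fin n)) : Equiv.Perm (Fin (n + 1)) :=
  (finSuccEquiv' p).trans (σ.optionCongr.trans finSuccEquivLast.symm)

lemma insertMax_self (p : Fin (n + 1)) (σ : Equiv.Perm (Fin n)) :
    insertMax p σ p = Fin.last n := by
  simp [insertMax]

lemma insertMax_succAbove (p : Fin (n + 1)) (σ : Equiv.Perm (Fin n)) (i : Fin n) :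
    insertMax p σ (p.succAbove i) = (σ i).castSucc := by
  simp [insertMax]

lemma insertMax_bijective (n : ℕ) :
    Function.Bijective fun x : Fin (n + 1) × Equiv.Perm (Fin n) ↦ insertMax x.1 x.2 := by
  rw [Fintype.bijective_iff_injective_and_card]
  refine ⟨?_, by simp [Fintype.card_perm, Nat.factorial_succ]⟩
  rintro ⟨p, σ⟩ ⟨q, τ⟩ (h : insertMax p σ = insertMax q τ)
  obtain rfl : p = q := (insertMax q τ).injective <| by rw [insertMax_self, ← h, insertMax_self]
  have hστ : σ = τ := Equiv.ext fun i ↦ Fin.castSucc_injective n <| by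
    rw [← insertMax_succAbove p, h, insertMax_succAbove]
  rw [hστ]

lemma paddedWord_insertMax (p : Fin (n + 1)) (σ : Equiv.Perm (Fin n)) :
    paddedWord (insertMax p σ) =
      p.castSucc.succ.insertNth (α := fun _ ↦ ℤ) (n : ℤ) (paddedWord σ) := by
  refine Fin.eq_insertNth_iff.2 ⟨?_, funext fun j ↦ ?_⟩
  · rw [paddedWord_succ_castSucc, insertMax_self, Fin.val_last]
  · rw [Fin.removeNth_apply]
    cases j using Fin.cases with
    | zero => rw [Fin.succ_succAbove_zero, paddedWord_zero, paddedWord_zero]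
    | succ j =>
      rw [Fin.succ_succAbove_succ]
      cases j using Fin.lastCases with
      | last =>
        rw [Fin.succAbove_ne_last_last p.castSucc_ne_last, paddedWord_succ_last,
          paddedWord_succ_last]
      | cast i =>
        rw [Fin.castSucc_succAbove_castSucc, paddedWord_succ_castSucc, paddedWord_succ_castSucc,
          insertMax_succAbove, Fin.val_castSucc]

lemma card_descents_paddedWord_insertMax (p : Fin (n + 1)) (σ : Equiv.Perm (Fin n)) :
    #(descents (paddedWord (insertMax p σ))) = #(insert p (descents (paddedWord σ))) := by
  rw [paddedWord_insertMax, descents_insertNth (paddedWord_lt σ _).le (paddedWord_lt σ _),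
    card_map]

end PaddedWord

lemma sum_pow_card_insert {ι R : Type*} [Fintype ι] [DecidableEq ι] [Semiring R]
    (s : Finset ι) (x : R) :
    ∑ i, x ^ #(insert i s) = #s * x ^ #s + #sᶜ * x ^ (#s + 1) := by
  rw [← sum_add_sum_compl s]
  congr 1
  · rw [sum_congr rfl fun i hi ↦ by rw [insert_eq_of_mem hi], sum_const, nsmul_eq_mul]
  · rw [sum_congr rfl fun i hi ↦ by rw [card_insert_of_notMem (mem_compl.1 hi)], sum_const,
      nsmul_eq_mul]

section EulerianPoly

open Polynomial

lemma sum_X_pow_card_insert {ι R : Type*} [Fintype ι] [DecidableEq ι] [CommRing R]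
    (s : Finset ι) :
    ∑ i, (X : R[X]) ^ #(insert i s) =
      (Fintype.card ι : R[X]) * X * X ^ #s + X * (1 - X) * derivative (X ^ #s) := by
  have X_mul_derivative : X * derivative (X ^ #s : R[X]) = (#s : R[X]) * X ^ #s := by
    cases #s with
    | zero => simp
    | succ c =>
      simp only [derivative_X_pow_succ, map_add, map_natCast, map_one, Nat.cast_succ]
      ring
  rw [sum_pow_card_insert, ← card_add_card_compl s, Nat.cast_add]
  linear_combination -(1 - X) * X_mul_derivative

lemma eulerianPoly_zero (R : Type*) [CommSemiring R] : eulerianPoly R 0 = 1 := by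
  simp [eulerianPoly, descentCount]

lemma X_mul_eulerianPoly (R : Type*) [CommSemiring R] (n : ℕ) :
    X * eulerianPoly R n = ∑ σ : Equiv.Perm (Fin n), X ^ #(descents (paddedWord σ)) := by
  simp_rw [eulerianPoly, mul_sum, card_descents_paddedWord, pow_succ']

lemma X_mul_eulerianPoly_succ (R : Type*) [CommRing R] (n : ℕ) :
    X * eulerianPoly R (n + 1) =
      ((n : R[X]) + 1) * X * (X * eulerianPoly R n) +
        X * (1 - X) * derivative (X * eulerianPoly R n) := by
  simp_rw [X_mul_eulerianPoly, ← (insertMax_bijective n).sum_comp, Fintype.sum_prod_type_right,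
    card_descents_paddedWord_insertMax, sum_X_pow_card_insert, sum_add_distrib, derivative_sum,
    mul_sum, Fintype.card_fin, Nat.cast_succ]

end EulerianPoly

theorem carlitz_identity_general (R : Type*) [CommRing R] (d : ℕ) :
    (PowerSeries.mk fun k => if k = 0 then (0 : R) else (k : R) ^ d) *
        (1 - PowerSeries.X) ^ (d + 1) =
      PowerSeries.X * (eulerianPoly R d : PowerSeries R) := by
  induction d with
  | zero => simpa [eulerianPoly_zero] using mk_ite_pow_zero_mul_one_sub_X R
  | succ d ih =>
    rw [mk_ite_pow_succ_eq_X_mul_derivative, X_mul_derivative_mul_one_sub_X_pow, ih]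
    have recurrence :=
      congrArg Polynomial.coeToPowerSeries.ringHom (X_mul_eulerianPoly_succ R d)
    simp only [map_add, map_sub, map_mul, map_natCast, map_one,
      Polynomial.coeToPowerSeries.ringHom_apply, ← PowerSeries.derivative_coe] at recurrence
    simpa using recurrence.symm

/-- Carlitz identity: `(∑_{k≥1} k^d t^k) (1-t)^{d+1} = t E_d(t)` as formal power series. -/
theorem carlitz_identity (d : ℕ) :
    (PowerSeries.mk fun k => if k = 0 then (0 : ℚ) else (k : ℚ) ^ d) *
        (1 - PowerSeries.X) ^ (d + 1) =
      PowerSeries.X * (eulerianPoly ℚ d : PowerSeries ℚ) :=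
  carlitz_identity_general ℚ d
end

section
/- (Lemma 3.7, real convergent form.) Let A, B, z, t be real numbers with |t| < exp(−(|A|+|B|)·|z|/2). Then each of the four numbers 1 − t·e^{(A−B)z/2}, 1 − t·e^{−(A−B)z/2}, 1 − t·e^{(A+B)z/2}, 1 − t·e^{−(A+B)z/2} is positive, the series ∑_{k≥1} A·B·z²·k·S(kAz)·S(kBz)·t^k converges absolutely, and its sum equals log( ((1 − t·e^{(A−B)z/2})·(1 − t·e^{−(A−B)z/2})) / ((1 − t·e^{(A+B)z/2})·(1 − t·e^{−(A+B)z/2})) ). -/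
/-!
Since `x S(x) = 2 sinh(x/2)`, the product formula `2 sinh a sinh b = cosh(a + b) - cosh(a - b)`
turns the `k`-th term of the series into the difference of `2 cosh(k(A+B)z/2) t^k/k` and
`2 cosh(k(A-B)z/2) t^k/k`. As `2 cosh(kx) t^k = (t e^x)^k + (t e^{-x})^k`, each of these two series
is a sum of two logarithmic series `∑ u^k/k = -log(1 - u)`, which converge because
`|A ± B| ≤ |A| + |B|`.
-/

/-- The function `S(x) = sinh(x/2)/(x/2)` for `x ≠ 0`, with `S(0) = 1`. -/
noncomputable def S (x : ℝ) : ℝ := if x = 0 then 1 else Real.sinh (x / 2) / (x / 2)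

theorem mul_S (x : ℝ) : x * S x = 2 * Real.sinh (x / 2) := by
  by_cases hx : x = 0
  · simp [hx]
  · rw [S, if_neg hx]
    field_simp

theorem mul_S_mul_mul_S (x y : ℝ) :
    x * S x * (y * S y) = 2 * Real.cosh ((x + y) / 2) - 2 * Real.cosh ((x - y) / 2) := by
  rw [mul_S, mul_S, add_div, sub_div, Real.cosh_add, Real.cosh_sub]
  ring

theorem mul_mul_mul_S_mul_S (x y r : ℝ) :
    x * y * r * S (r * x) * S (r * y) =
      2 * Real.cosh (r * ((x + y) / 2)) / r - 2 * Real.cosh (r * ((x - y) / 2)) / r := by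
  rcases eq_or_ne r 0 with rfl | hr
  · simp
  calc x * y * r * S (r * x) * S (r * y)
      = r * x * S (r * x) * (r * y * S (r * y)) / r := by field_simp
    _ = 2 * Real.cosh (r * ((x + y) / 2)) / r - 2 * Real.cosh (r * ((x - y) / 2)) / r := by
      rw [mul_S_mul_mul_S, ← mul_add, ← mul_sub r x y, mul_div_assoc r, mul_div_assoc r, sub_div]

-- The term at `k = 0` is `1 / 0 = 0`.
theorem hasSum_pow_div_natCast {x : ℝ} (hx : |x| < 1) :
    HasSum (fun k : ℕ => x ^ k / k) (-Real.log (1 - x)) := by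
  rw [← hasSum_nat_add_iff' 1]
  simpa using Real.hasSum_pow_div_log_of_abs_lt_one hx

theorem abs_mul_exp_lt_one {t x : ℝ} (ht : |t| < Real.exp (-|x|)) : |t * Real.exp x| < 1 := by
  rw [abs_mul, Real.abs_exp]
  calc |t| * Real.exp x < Real.exp (-|x|) * Real.exp x := by gcongr
    _ = Real.exp (-|x| + x) := (Real.exp_add _ _).symm
    _ ≤ 1 := Real.exp_le_one_iff.mpr (by linarith [le_abs_self x])

theorem one_sub_mul_exp_pos {t x : ℝ} (ht : |t| < Real.exp (-|x|)) : 0 < 1 - t * Real.exp x :=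
  sub_pos.mpr (abs_lt.mp (abs_mul_exp_lt_one ht)).2

theorem one_sub_mul_exp_neg_pos {t x : ℝ} (ht : |t| < Real.exp (-|x|)) :
    0 < 1 - t * Real.exp (-x) :=
  one_sub_mul_exp_pos (by rwa [abs_neg])

theorem hasSum_two_mul_cosh_div_mul_pow {t x : ℝ} (ht : |t| < Real.exp (-|x|)) :
    HasSum (fun k : ℕ => 2 * Real.cosh (k * x) / k * t ^ k)
      (-Real.log ((1 - t * Real.exp x) * (1 - t * Real.exp (-x)))) := by
  have ht' : |t| < Real.exp (-|-x|) := by rwa [abs_neg]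
  have hterm (k : ℕ) : 2 * Real.cosh (k * x) / k * t ^ k =
      (t * Real.exp x) ^ k / k + (t * Real.exp (-x)) ^ k / k := by
    rw [mul_pow, mul_pow, ← Real.exp_nat_mul, ← Real.exp_nat_mul, mul_neg, Real.cosh_eq]
    ring
  simp only [hterm]
  rw [Real.log_mul (one_sub_mul_exp_pos ht).ne' (one_sub_mul_exp_neg_pos ht).ne', neg_add]
  exact (hasSum_pow_div_natCast (abs_mul_exp_lt_one ht)).add
    (hasSum_pow_div_natCast (abs_mul_exp_lt_one ht'))

theorem abs_add_mul_div_two_le (a b z : ℝ) : |(a + b) * z / 2| ≤ (|a| + |b|) * |z| / 2 := by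
  rw [abs_div, abs_mul, abs_two]
  gcongr
  exact abs_add_le a b

/-- Real convergent form of Lemma 3.7: for `|t| < exp(-(|A|+|B|)|z|/2)`, the four
numbers `1 - t e^{±(A∓B)z/2}` are positive, the series
`∑_{k≥1} A B z² k S(kAz) S(kBz) t^k` converges absolutely, and its sum is the
logarithm of the displayed ratio. -/
theorem sum_S_eq_log (A B z t : ℝ) (ht : |t| < Real.exp (-((|A| + |B|) * |z| / 2))) :
    0 < 1 - t * Real.exp ((A - B) * z / 2) ∧
    0 < 1 - t * Real.exp (-((A - B) * z / 2)) ∧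
    0 < 1 - t * Real.exp ((A + B) * z / 2) ∧
    0 < 1 - t * Real.exp (-((A + B) * z / 2)) ∧
    Summable (fun k : ℕ =>
      |A * B * z ^ 2 * (k : ℝ) * S ((k : ℝ) * A * z) * S ((k : ℝ) * B * z) * t ^ k|) ∧
    HasSum
      (fun k : ℕ =>
        A * B * z ^ 2 * (k : ℝ) * S ((k : ℝ) * A * z) * S ((k : ℝ) * B * z) * t ^ k)
      (Real.log
        ((1 - t * Real.exp ((A - B) * z / 2)) * (1 - t * Real.exp (-((A - B) * z / 2))) /
          ((1 - t * Real.exp ((A + B) * z / 2)) * (1 - t * Real.exp (-((A + B) * z / 2)))))) := by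
  have hadd : |t| < Real.exp (-|(A + B) * z / 2|) :=
    ht.trans_le (Real.exp_le_exp.mpr (neg_le_neg (abs_add_mul_div_two_le A B z)))
  have hsub : |t| < Real.exp (-|(A - B) * z / 2|) := by
    refine ht.trans_le (Real.exp_le_exp.mpr (neg_le_neg ?_))
    simpa [sub_eq_add_neg] using abs_add_mul_div_two_le A (-B) z
  have hterm (k : ℕ) :
      A * B * z ^ 2 * (k : ℝ) * S ((k : ℝ) * A * z) * S ((k : ℝ) * B * z) * t ^ k =
        2 * Real.cosh (k * ((A + B) * z / 2)) / k * t ^ k -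
          2 * Real.cosh (k * ((A - B) * z / 2)) / k * t ^ k := by
    rw [← sub_mul, add_mul A B z, sub_mul A B z, ← mul_mul_mul_S_mul_S, ← mul_assoc (k : ℝ) A z,
      ← mul_assoc (k : ℝ) B z]
    ring
  have hsum := (hasSum_two_mul_cosh_div_mul_pow hadd).sub (hasSum_two_mul_cosh_div_mul_pow hsub)
  simp only [← hterm, neg_sub_neg] at hsum
  have hsub₁ := one_sub_mul_exp_pos hsub
  have hsub₂ := one_sub_mul_exp_neg_pos hsub
  have hadd₁ := one_sub_mul_exp_pos hadd
  have hadd₂ := one_sub_mul_exp_neg_pos hadd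
  rw [← Real.log_div (mul_pos hsub₁ hsub₂).ne' (mul_pos hadd₁ hadd₂).ne'] at hsum
  exact ⟨hsub₁, hsub₂, hadd₁, hadd₂, hsum.summable.abs, hsum⟩
end

section
/- (Lemma 4.6.) For all real numbers A₁, A₂, B: cosh(A₁)·sinh(A₂)·sinh(B)·sinh(A₁+A₂+B) + sinh(A₁)·cosh(A₂)·sinh(B)·sinh(A₁+A₂+B) + sinh(A₁)·sinh(A₂)·cosh(B)·sinh(A₁+A₂+B) − sinh(A₁)·sinh(A₂)·sinh(B)·cosh(A₁+A₂+B) = sinh(A₁+B)·sinh(A₂+B)·sinh(A₁+A₂). -/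
section

open Complex

/-- Ptolemy's identity for the hyperbolic sine. -/
theorem sinh_add_mul_sinh_add (x y z : ℂ) :
    sinh (x + z) * sinh (y + z) = sinh x * sinh y + sinh z * sinh (x + y + z) := by
  simp only [sinh_add, cosh_add]
  linear_combination sinh x * sinh y * cosh_sq_sub_sinh_sq z

theorem cosh_sinh_four_terms_general (A₁ A₂ B : ℂ) :
    cosh A₁ * sinh A₂ * sinh B * sinh (A₁ + A₂ + B) +
        sinh A₁ * cosh A₂ * sinh B * sinh (A₁ + A₂ + B) +
        sinh A₁ * sinh A₂ * cosh B * sinh (A₁ + A₂ + B) -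
        sinh A₁ * sinh A₂ * sinh B * cosh (A₁ + A₂ + B) =
      sinh (A₁ + B) * sinh (A₂ + B) * sinh (A₁ + A₂) := by
  have sinh_sum_sub :
      sinh (A₁ + A₂ + B) * cosh B - cosh (A₁ + A₂ + B) * sinh B = sinh (A₁ + A₂) := by
    rw [← sinh_sub, add_sub_cancel_right]
  calc
    _ = (sinh A₁ * cosh A₂ + cosh A₁ * sinh A₂) * (sinh B * sinh (A₁ + A₂ + B)) +
          sinh A₁ * sinh A₂ *
            (sinh (A₁ + A₂ + B) * cosh B - cosh (A₁ + A₂ + B) * sinh B) := by ring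
    _ = sinh (A₁ + A₂) * (sinh B * sinh (A₁ + A₂ + B)) +
          sinh A₁ * sinh A₂ * sinh (A₁ + A₂) := by rw [← sinh_add, sinh_sum_sub]
    _ = (sinh A₁ * sinh A₂ + sinh B * sinh (A₁ + A₂ + B)) * sinh (A₁ + A₂) := by ring
    _ = sinh (A₁ + B) * sinh (A₂ + B) * sinh (A₁ + A₂) := by rw [← sinh_add_mul_sinh_add]

end

/-- Lemma 4.6. -/
theorem cosh_sinh_four_terms (A₁ A₂ B : ℝ) :
    Real.cosh A₁ * Real.sinh A₂ * Real.sinh B * Real.sinh (A₁ + A₂ + B) +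
        Real.sinh A₁ * Real.cosh A₂ * Real.sinh B * Real.sinh (A₁ + A₂ + B) +
        Real.sinh A₁ * Real.sinh A₂ * Real.cosh B * Real.sinh (A₁ + A₂ + B) -
        Real.sinh A₁ * Real.sinh A₂ * Real.sinh B * Real.cosh (A₁ + A₂ + B) =
      Real.sinh (A₁ + B) * Real.sinh (A₂ + B) * Real.sinh (A₁ + A₂) := by
  exact_mod_cast cosh_sinh_four_terms_general A₁ A₂ B
end
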